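/- Let ψ^{AR} be a density operator on A⊗R with A = A₁⊗A₂. Then ∫_{U(A)} ‖ σ^{A₂R}(U) − (I^{A₂}/d_{A₂}) ⊗ ψ^R ‖₁² dU ≤ (2 d_A d_R / d_{A₁}²) ( Tr[(ψ^{AR})²] + 2 Tr[(ψ^A)²] Tr[(ψ^R)²] ). -/

import Mathlib

open Matrix MeasureTheory
open scoped Kronecker ComplexOrder

/-- The positive semidefinite square root of a positive semidefinite matrix (the definition of
the older Mathlib, since removed). -/
noncomputable def Matrix.PosSemidef.sqrt {n 𝕜 : Type*} [Fintype n] [RCLike 𝕜] [DecidableEq n]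
    {A : Matrix n n 𝕜} (hA : A.PosSemidef) : Matrix n n 𝕜 :=
  hA.1.eigenvectorUnitary.1 * diagonal ((↑) ∘ Real.sqrt ∘ hA.1.eigenvalues) *
  (star hA.1.eigenvectorUnitary : Matrix n n 𝕜)

/-- Trace norm `‖M‖₁ = Tr √(Mᴴ M)` of a complex square matrix. -/
noncomputable def traceNorm {n : Type*} [Fintype n] [DecidableEq n] (M : Matrix n n ℂ) : ℝ :=
  ((Matrix.posSemidef_conjTranspose_mul_self M).sqrt.trace).re

noncomputable instance matMeas {m n : Type*} : MeasurableSpace (Matrix m n ℂ) :=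
  (inferInstance : MeasurableSpace (m → n → ℂ))

/-- `σ^{A₂R}(U) = Tr_{A₁}[(U ⊗ I_R) ψ (U ⊗ I_R)ᴴ]`. -/
noncomputable def sigmaA2R {ιA₁ ιA₂ ιR : Type} [Fintype ιA₁] [Fintype ιA₂] [Fintype ιR]
    [DecidableEq ιR]
    (ψ : Matrix ((ιA₁ × ιA₂) × ιR) ((ιA₁ × ιA₂) × ιR) ℂ)
    (U : Matrix (ιA₁ × ιA₂) (ιA₁ × ιA₂) ℂ) : Matrix (ιA₂ × ιR) (ιA₂ × ιR) ℂ :=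
  Matrix.of fun i j => ∑ a₁ : ιA₁,
    ((U ⊗ₖ (1 : Matrix ιR ιR ℂ)) * ψ * (U ⊗ₖ (1 : Matrix ιR ιR ℂ))ᴴ)
      ((a₁, i.1), i.2) ((a₁, j.1), j.2)

/-- Partial trace over the first tensor factor. -/
noncomputable def ptrFst {α β : Type*} [Fintype α] (M : Matrix (α × β) (α × β) ℂ) :
    Matrix β β ℂ :=
  Matrix.of fun i j => ∑ a : α, M (a, i) (a, j)

/-- Partial trace over the second tensor factor. -/
noncomputable def ptrSnd {α β : Type*} [Fintype β] (M : Matrix (α × β) (α × β) ℂ) :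
    Matrix α α ℂ :=
  Matrix.of fun i j => ∑ b : β, M (i, b) (j, b)


theorem traceNorm_sq_le {n : Type*} [Fintype n] [DecidableEq n] (M : Matrix n n ℂ) :
    (traceNorm M) ^ 2 ≤ (Fintype.card n : ℝ) * ((Mᴴ * M).trace.re) := by
  have hP := Matrix.posSemidef_conjTranspose_mul_self M
  have h1 : traceNorm M = ∑ i, Real.sqrt (hP.1.eigenvalues i) := by
    unfold traceNorm Matrix.PosSemidef.sqrt
    rw [Matrix.trace_mul_cycle]
    have : (star hP.1.eigenvectorUnitary : Matrix n n ℂ) * hP.1.eigenvectorUnitary.1 = 1 :=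
      Unitary.coe_star_mul_self _
    rw [this, one_mul, Matrix.trace_diagonal]
    simp
  have h2 : (Mᴴ * M).trace.re = ∑ i, hP.1.eigenvalues i := by
    rw [hP.1.trace_eq_sum_eigenvalues]
    simp
  rw [h1, h2]
  have h3 := sq_sum_le_card_mul_sum_sq (s := Finset.univ)
    (f := fun i => Real.sqrt (hP.1.eigenvalues i))
  refine h3.trans (le_of_eq ?_)
  congr 1
  exact Finset.sum_congr rfl fun i _ => Real.sq_sqrt (hP.eigenvalues_nonneg i)

theorem exists_perm_pair {n : Type*} [DecidableEq n] {i j k l : n} (h : i ≠ j) (h' : k ≠ l) :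
    ∃ π : Equiv.Perm n, π i = k ∧ π j = l := by
  refine ⟨Equiv.swap (Equiv.swap i k j) l * Equiv.swap i k, ?_, ?_⟩
  · rw [Equiv.Perm.mul_apply, Equiv.swap_apply_left]
    refine Equiv.swap_apply_of_ne_of_ne ?_ h'
    intro e
    have := congrArg (Equiv.swap i k) e
    simp at this
    exact h this
  · simp

/-- Invariance of a four-tensor under the (U, conj U, U, conj U) action. -/
def TensorInv {n : Type*} [Fintype n] [DecidableEq n] (m : n → n → n → n → ℂ) : Prop :=
  ∀ V ∈ Matrix.unitaryGroup n ℂ, ∀ w x y z, m w x y z =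
    ∑ w', ∑ x', ∑ y', ∑ z', V w w' * star (V x x') * V y y' * star (V z z') * m w' x' y' z'

theorem TensorInv.diag {n : Type*} [Fintype n] [DecidableEq n] {m : n → n → n → n → ℂ}
    (h : TensorInv m) (v : n → ℂ) (hv : ∀ i, v i * star (v i) = 1) (w x y z : n) :
    m w x y z = v w * star (v x) * v y * star (v z) * m w x y z := by
  have := h (Matrix.diagonal v) (by
    rw [Matrix.mem_unitaryGroup_iff, Matrix.star_eq_conjTranspose, Matrix.diagonal_conjTranspose,
      Matrix.diagonal_mul_diagonal]
    rw [← Matrix.diagonal_one]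
    congr 1
    funext i
    exact hv i) w x y z
  refine this.trans ?_
  simp only [Matrix.diagonal_apply, apply_ite star, star_zero, ite_mul, mul_ite, zero_mul, mul_zero,
    Finset.sum_ite_eq, Finset.mem_univ, if_true]

theorem TensorInv.perm {n : Type*} [Fintype n] [DecidableEq n] {m : n → n → n → n → ℂ}
    (h : TensorInv m) (π : Equiv.Perm n) (w x y z : n) :
    m w x y z = m (π w) (π x) (π y) (π z) := by
  have := h (Matrix.of fun i j => if π i = j then 1 else 0) (by
    rw [Matrix.mem_unitaryGroup_iff, Matrix.star_eq_conjTranspose]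
    ext i j
    simp [Matrix.mul_apply, Matrix.one_apply, eq_comm]) w x y z
  refine this.trans ?_
  simp only [Matrix.of_apply, apply_ite star, star_zero, star_one, ite_mul, mul_ite, zero_mul,
    mul_zero, one_mul, mul_one, Finset.sum_ite_eq, Finset.mem_univ, if_true]

theorem TensorInv.zero {n : Type*} [Fintype n] [DecidableEq n] {m : n → n → n → n → ℂ}
    (h : TensorInv m) (w x y z : n) (hn : ¬ ((w = x ∧ y = z) ∨ (w = z ∧ x = y))) :
    m w x y z = 0 := by
  have key : ∀ k, m w x y z = _ := fun k => h.diag (fun i => if i = k then Complex.I else 1)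
    (by intro i; by_cases hi : i = k <;> simp [hi]) w x y z
  have fin : ∀ c : ℂ, c ≠ 1 → m w x y z = c * m w x y z → m w x y z = 0 := by
    intro c hc e
    have : (1 - c) * m w x y z = 0 := by linear_combination e
    rcases mul_eq_zero.1 this with h1 | h1
    · exact absurd (by linear_combination -h1) hc
    · exact h1
  have hI : Complex.I ≠ 1 := fun e => by simpa using congrArg Complex.re e
  have hI2 : Complex.I * Complex.I ≠ 1 := by rw [Complex.I_mul_I]; norm_num
  by_cases h1 : w = x
  · subst h1
    have hyz : y ≠ z := fun e => hn (Or.inl ⟨rfl, e⟩)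
    have := key y
    by_cases hwy : w = y
    · subst hwy
      refine fin _ ?_ this
      simp [hyz.symm, hI]
    · refine fin _ ?_ this
      simp [hwy, hyz.symm, hI]
  · by_cases h2 : w = z
    · subst h2
      have hxy : x ≠ y := fun e => hn (Or.inr ⟨rfl, e⟩)
      have := key y
      by_cases hwy : w = y
      · subst hwy
        refine fin _ ?_ this
        simp [hxy, hI]
      · refine fin _ ?_ this
        simp [hwy, hxy, hI]
    · have := key w
      by_cases hwy : y = w
      · subst hwy
        refine fin _ ?_ this
        simp [Ne.symm h1, Ne.symm h2]
        norm_num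
      · refine fin _ ?_ this
        simp [Ne.symm h1, Ne.symm h2, hwy, hI]

theorem TensorInv.split {n : Type*} [Fintype n] [DecidableEq n] {m : n → n → n → n → ℂ}
    (h : TensorInv m) {i j : n} (hij : i ≠ j) :
    m i i i i = m i i j j + m i j j i := by
  have s1 : star ((1 - Complex.I) / 2) = (1 + Complex.I) / 2 := by simp
  have s2 : star ((1 + Complex.I) / 2) = (1 - Complex.I) / 2 := by simp [sub_eq_add_neg]
  have := h (Matrix.of fun a b => (if a = b then (1 - Complex.I) / 2 else 0) +
      (if Equiv.swap i j a = b then (1 + Complex.I) / 2 else 0)) (by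
    rw [Matrix.mem_unitaryGroup_iff, Matrix.star_eq_conjTranspose]
    ext a b
    simp only [Matrix.mul_apply, Matrix.conjTranspose_apply, Matrix.of_apply, star_add,
      add_mul, mul_add, Finset.sum_add_distrib, apply_ite star, ite_mul, mul_ite, star_zero, zero_mul,
      mul_zero, Finset.sum_ite_eq, Finset.mem_univ, if_true, Matrix.one_apply,
      EmbeddingLike.apply_eq_iff_eq]
    have e : (a = Equiv.swap i j b) ↔ (Equiv.swap i j a = b) := by
      constructor
      · rintro rfl; simp
      · rintro rfl; simp
    simp only [e]
    rw [s1, s2]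
    split_ifs <;> ring_nf <;> (try rw [Complex.I_sq]) <;> ring_nf) i i i i
  have two : ∀ (p q : ℂ) (G : n → ℂ),
      ∑ w', ((if i = w' then p else 0) + (if j = w' then q else 0)) * G w' = p * G i + q * G j := by
    intro p q G
    simp [add_mul, Finset.sum_add_distrib]
  simp only [Matrix.of_apply, Equiv.swap_apply_left, star_add, apply_ite star, star_zero,
    mul_assoc, ← Finset.mul_sum, two] at this
  have z : ∀ w x y z, ¬ ((w = x ∧ y = z) ∨ (w = z ∧ x = y)) → m w x y z = 0 := h.zero
  have hji := hij.symm
  rw [z i i i j, z i i j i, z i j i i, z j i i i, z j j j i, z j j i j, z j i j j, z i j j j,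
    z i j i j, z j i j i] at this <;> try simp [hij, hji]
  have p1 := h.perm (Equiv.swap i j) i i i i
  have p2 := h.perm (Equiv.swap i j) i i j j
  have p3 := h.perm (Equiv.swap i j) i j j i
  simp only [Equiv.swap_apply_left, Equiv.swap_apply_right] at p1 p2 p3
  rw [← p1, ← p2, ← p3] at this
  rw [s1, s2] at this
  have I2 := Complex.I_sq
  have I4 : Complex.I ^ 4 = 1 := by rw [show (4:ℕ) = 2*2 from rfl, pow_mul, I2]; norm_num
  ring_nf at this
  rw [I2, I4] at this
  linear_combination 2 * this

theorem TensorInv.form {n : Type*} [Fintype n] [DecidableEq n] {m : n → n → n → n → ℂ}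
    (h : TensorInv m) : ∃ Y Z : ℂ, ∀ w x y z, m w x y z =
      (if w = x ∧ y = z then Y else 0) + (if w = z ∧ x = y then Z else 0) := by
  rcases subsingleton_or_nontrivial n with hs | hs
  · rcases isEmpty_or_nonempty n with he | ⟨⟨i⟩⟩
    · exact ⟨0, 0, fun w => he.elim w⟩
    · refine ⟨m i i i i, 0, fun w x y z => ?_⟩
      rw [Subsingleton.elim w i, Subsingleton.elim x i, Subsingleton.elim y i,
        Subsingleton.elim z i]
      simp
  · obtain ⟨i, j, hij⟩ := exists_pair_ne n
    refine ⟨m i i j j, m i j j i, fun w x y z => ?_⟩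
    by_cases hwx : w = x ∧ y = z
    · obtain ⟨rfl, rfl⟩ := hwx
      by_cases hwy : w = y
      · subst hwy
        simp only [and_self, if_true]
        have := h.perm (Equiv.swap i w) i i i i
        simp only [Equiv.swap_apply_left] at this
        rw [← this]
        exact h.split hij
      · obtain ⟨π, h1, h2⟩ := exists_perm_pair hij hwy
        have := h.perm π i i j j
        rw [h1, h2] at this
        simp [hwy, this]
    · by_cases hwz : w = z ∧ x = y
      · obtain ⟨rfl, rfl⟩ := hwz
        have hwx' : w ≠ x := fun e => hwx ⟨e, e.symm⟩
        obtain ⟨π, h1, h2⟩ := exists_perm_pair hij hwx'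
        have := h.perm π i j j i
        rw [h1, h2] at this
        simp [hwx', this]
      · rw [if_neg hwx, if_neg hwz, h.zero w x y z (by tauto)]
        simp

/-- The state rotated by a matrix on the first factor. -/
noncomputable def rot {α β : Type*} [Fintype α] [Fintype β] [DecidableEq β]
    (ψ : Matrix (α × β) (α × β) ℂ) (U : Matrix α α ℂ) : Matrix (α × β) (α × β) ℂ :=
  (U ⊗ₖ (1 : Matrix β β ℂ)) * ψ * (U ⊗ₖ (1 : Matrix β β ℂ))ᴴ

/-- Contraction of two copies over the second factor. -/
noncomputable def quad {α β : Type*} [Fintype β]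
    (φ : Matrix (α × β) (α × β) ℂ) (w x y z : α) : ℂ :=
  ∑ r, ∑ s, φ (w, r) (x, s) * φ (y, s) (z, r)

theorem rot_apply {α β : Type*} [Fintype α] [Fintype β] [DecidableEq β]
    (ψ : Matrix (α × β) (α × β) ℂ) (U : Matrix α α ℂ) (w x : α) (r s : β) :
    rot ψ U (w, r) (x, s) = ∑ w', ∑ x', U w w' * star (U x x') * ψ (w', r) (x', s) := by
  unfold rot
  simp only [Matrix.mul_apply, Matrix.conjTranspose_apply, Matrix.kroneckerMap_apply,
    Fintype.sum_prod_type, Matrix.one_apply, mul_ite, mul_one, mul_zero, apply_ite star, star_zero,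
    ite_mul, zero_mul, Finset.sum_ite_eq, Finset.mem_univ, if_true, Finset.sum_mul]
  rw [Finset.sum_comm]
  refine Finset.sum_congr rfl fun w' _ => Finset.sum_congr rfl fun x' _ => ?_
  ring

theorem rot_mul {α β : Type*} [Fintype α] [Fintype β] [DecidableEq β]
    (ψ : Matrix (α × β) (α × β) ℂ) (V U : Matrix α α ℂ) :
    rot ψ (V * U) = rot (rot ψ U) V := by
  have : (V * U) ⊗ₖ (1 : Matrix β β ℂ) = (V ⊗ₖ (1 : Matrix β β ℂ)) * (U ⊗ₖ (1 : Matrix β β ℂ)) := by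
    rw [← Matrix.mul_kronecker_mul, one_mul]
  unfold rot
  rw [this, Matrix.conjTranspose_mul]
  simp only [Matrix.mul_assoc]

theorem quad_rot {α β : Type*} [Fintype α] [Fintype β] [DecidableEq β]
    (φ : Matrix (α × β) (α × β) ℂ) (V : Matrix α α ℂ) (w x y z : α) :
    quad (rot φ V) w x y z = ∑ w', ∑ x', ∑ y', ∑ z',
      V w w' * star (V x x') * V y y' * star (V z z') * quad φ w' x' y' z' := by
  unfold quad
  simp only [rot_apply, Finset.sum_mul]
  simp only [Finset.mul_sum]
  have key : ∀ F : β → β → α → α → α → α → ℂ,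
      ∑ r, ∑ s, ∑ w', ∑ x', ∑ y', ∑ z', F r s w' x' y' z' =
      ∑ w', ∑ x', ∑ y', ∑ z', ∑ r, ∑ s, F r s w' x' y' z' := by
    intro F
    have one : ∀ G : β → β → α → ℂ, ∑ r, ∑ s, ∑ w', G r s w' = ∑ w', ∑ r, ∑ s, G r s w' := by
      intro G
      rw [Finset.sum_comm]
      rw [Finset.sum_congr rfl fun s _ => Finset.sum_comm]
      rw [Finset.sum_comm]
      exact Finset.sum_congr rfl fun s _ => Finset.sum_comm
    rw [one]
    refine Finset.sum_congr rfl fun w' _ => ?_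
    rw [one]
    refine Finset.sum_congr rfl fun x' _ => ?_
    rw [one]
    refine Finset.sum_congr rfl fun y' _ => ?_
    rw [one]
  rw [← key]
  refine Finset.sum_congr rfl fun r _ => Finset.sum_congr rfl fun s _ => ?_
  refine Finset.sum_congr rfl fun w' _ => ?_
  refine Finset.sum_congr rfl fun x' _ => ?_
  refine Finset.sum_congr rfl fun y' _ => Finset.sum_congr rfl fun z' _ => ?_
  ring

theorem ptrFst_rot {α β : Type*} [Fintype α] [DecidableEq α] [Fintype β] [DecidableEq β]
    (ψ : Matrix (α × β) (α × β) ℂ) (U : Matrix α α ℂ) (hU : U ∈ Matrix.unitaryGroup α ℂ) :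
    ptrFst (rot ψ U) = ptrFst ψ := by
  have h := Matrix.mem_unitaryGroup_iff'.1 hU
  ext r s
  simp only [ptrFst, Matrix.of_apply, rot_apply]
  rw [Finset.sum_comm, ]
  rw [Finset.sum_congr rfl fun w' _ => Finset.sum_comm]
  refine Finset.sum_congr rfl fun w' _ => ?_
  have : ∀ x', ∑ w, U w w' * star (U w x') * ψ (w', r) (x', s) =
      (1 : Matrix α α ℂ) x' w' * ψ (w', r) (x', s) := by
    intro x'
    rw [← h, Matrix.mul_apply, Finset.sum_mul]
    refine Finset.sum_congr rfl fun w _ => ?_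
    rw [Matrix.star_apply]
    ring
  simp only [this, Matrix.one_apply, ite_mul, one_mul, zero_mul, Finset.sum_ite_eq', Finset.mem_univ, if_true]

theorem trace_rot_sq {α β : Type*} [Fintype α] [DecidableEq α] [Fintype β] [DecidableEq β]
    (ψ : Matrix (α × β) (α × β) ℂ) (U : Matrix α α ℂ) (hU : U ∈ Matrix.unitaryGroup α ℂ) :
    (rot ψ U * rot ψ U).trace = (ψ * ψ).trace := by
  have h := Matrix.mem_unitaryGroup_iff'.1 hU
  have h1 : (U ⊗ₖ (1 : Matrix β β ℂ))ᴴ * (U ⊗ₖ (1 : Matrix β β ℂ)) = 1 := by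
    rw [Matrix.conjTranspose_kronecker, ← Matrix.mul_kronecker_mul, ← Matrix.star_eq_conjTranspose,
      h]
    simp
  unfold rot
  set W := U ⊗ₖ (1 : Matrix β β ℂ)
  have : W * ψ * Wᴴ * (W * ψ * Wᴴ) = W * (ψ * ψ) * Wᴴ := by
    calc _ = W * ψ * (Wᴴ * W) * ψ * Wᴴ := by simp only [Matrix.mul_assoc]
      _ = _ := by rw [h1]; simp only [Matrix.mul_assoc, Matrix.one_mul]
  rw [this, Matrix.trace_mul_cycle, h1, one_mul]

theorem quad_R {α β : Type*} [Fintype α] [Fintype β]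
    (φ : Matrix (α × β) (α × β) ℂ) :
    ∑ w, ∑ y, quad φ w w y y = (ptrFst φ * ptrFst φ).trace := by
  simp only [quad, Matrix.trace, Matrix.diag, Matrix.mul_apply, ptrFst, Matrix.of_apply,
    Finset.sum_mul_sum]
  have one : ∀ G : α → α → β → ℂ, ∑ w, ∑ y, ∑ r, G w y r = ∑ r, ∑ w, ∑ y, G w y r := by
    intro G
    rw [Finset.sum_congr rfl fun s _ => Finset.sum_comm]
    rw [Finset.sum_comm]
  rw [one]
  refine Finset.sum_congr rfl fun r _ => ?_
  rw [one]

theorem quad_P {α β : Type*} [Fintype α] [Fintype β]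
    (φ : Matrix (α × β) (α × β) ℂ) :
    ∑ w, ∑ x, quad φ w x x w = (φ * φ).trace := by
  simp only [quad, Matrix.trace, Matrix.diag, Matrix.mul_apply, Fintype.sum_prod_type]
  refine Finset.sum_congr rfl fun w _ => ?_
  rw [Finset.sum_comm]

theorem sigma_eq {ιA₁ ιA₂ ιR : Type} [Fintype ιA₁] [Fintype ιA₂] [Fintype ιR]
    [DecidableEq ιR]
    (ψ : Matrix ((ιA₁ × ιA₂) × ιR) ((ιA₁ × ιA₂) × ιR) ℂ)
    (U : Matrix (ιA₁ × ιA₂) (ιA₁ × ιA₂) ℂ) (i j : ιA₂ × ιR) :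
    sigmaA2R ψ U i j = ∑ a, rot ψ U ((a, i.1), i.2) ((a, j.1), j.2) := rfl

theorem trace_sigma_sq {ιA₁ ιA₂ ιR : Type} [Fintype ιA₁] [Fintype ιA₂] [Fintype ιR]
    [DecidableEq ιR]
    (ψ : Matrix ((ιA₁ × ιA₂) × ιR) ((ιA₁ × ιA₂) × ιR) ℂ)
    (U : Matrix (ιA₁ × ιA₂) (ιA₁ × ιA₂) ℂ) :
    (sigmaA2R ψ U * sigmaA2R ψ U).trace = ∑ i, ∑ j, ∑ a, ∑ c,
      quad (rot ψ U) (a, i) (a, j) (c, j) (c, i) := by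
  simp only [quad, Matrix.trace, Matrix.diag, Matrix.mul_apply, Fintype.sum_prod_type,
    sigma_eq, Finset.sum_mul_sum]
  refine Finset.sum_congr rfl fun i _ => ?_
  rw [Finset.sum_comm]
  refine Finset.sum_congr rfl fun j _ => ?_
  have one : ∀ G : ιA₁ → ιA₁ → ιR → ℂ, ∑ w, ∑ y, ∑ r, G w y r = ∑ r, ∑ w, ∑ y, G w y r := by
    intro G
    rw [Finset.sum_congr rfl fun s _ => Finset.sum_comm]
    rw [Finset.sum_comm]
  rw [one]
  refine Finset.sum_congr rfl fun r _ => ?_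
  rw [one]

theorem ptrFst_sigma {ιA₁ ιA₂ ιR : Type} [Fintype ιA₁] [Fintype ιA₂] [Fintype ιR]
    [DecidableEq ιR]
    (ψ : Matrix ((ιA₁ × ιA₂) × ιR) ((ιA₁ × ιA₂) × ιR) ℂ)
    (U : Matrix (ιA₁ × ιA₂) (ιA₁ × ιA₂) ℂ) :
    ptrFst (sigmaA2R ψ U) = ptrFst (rot ψ U) := by
  ext r s
  simp only [ptrFst, Matrix.of_apply, sigma_eq, Fintype.sum_prod_type]
  rw [Finset.sum_comm]

theorem trace_mul_tau {β γ : Type*} [Fintype β] [DecidableEq β] [Fintype γ]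
    (N : Matrix (β × γ) (β × γ) ℂ) (c : ℂ) (ρ : Matrix γ γ ℂ) :
    (N * ((c • (1 : Matrix β β ℂ)) ⊗ₖ ρ)).trace = c * (ptrFst N * ρ).trace := by
  simp only [Matrix.trace, Matrix.diag, Matrix.mul_apply, Fintype.sum_prod_type,
    Matrix.kroneckerMap_apply, Matrix.smul_apply, Matrix.one_apply, ptrFst, Matrix.of_apply,
    smul_eq_mul, mul_ite, ite_mul, mul_one, mul_zero, zero_mul, Finset.mul_sum, Finset.sum_mul]
  rw [Finset.sum_comm]
  refine Finset.sum_congr rfl fun r _ => ?_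
  have : ∀ i : β, ∑ x, ∑ s, (if x = i then N (i, r) (x, s) * (c * ρ s r) else 0) =
      ∑ s, N (i, r) (i, s) * (c * ρ s r) := by
    intro i
    rw [Finset.sum_comm]
    simp
  rw [Finset.sum_congr rfl fun i _ => this i, Finset.sum_comm]
  refine Finset.sum_congr rfl fun s _ => Finset.sum_congr rfl fun i _ => ?_
  ring

theorem ptrFst_tau {β γ : Type*} [Fintype β] [DecidableEq β] [Nonempty β]
    (ρ : Matrix γ γ ℂ) :
    ptrFst ((((Fintype.card β : ℂ))⁻¹ • (1 : Matrix β β ℂ)) ⊗ₖ ρ) = ρ := by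
  ext r s
  simp [ptrFst]

theorem rot_isHermitian {α β : Type*} [Fintype α] [Fintype β] [DecidableEq β]
    {ψ : Matrix (α × β) (α × β) ℂ} (h : ψ.IsHermitian) (U : Matrix α α ℂ) :
    (rot ψ U).IsHermitian :=
  Matrix.isHermitian_mul_mul_conjTranspose _ h

theorem ptrFst_isHermitian {α β : Type*} [Fintype α]
    {ψ : Matrix (α × β) (α × β) ℂ} (h : ψ.IsHermitian) : (ptrFst ψ).IsHermitian := by
  ext r s
  simp only [ptrFst, Matrix.conjTranspose_apply, Matrix.of_apply, star_sum]
  exact Finset.sum_congr rfl fun a _ => h.apply _ _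

theorem ptrSnd_isHermitian {α β : Type*} [Fintype β]
    {ψ : Matrix (α × β) (α × β) ℂ} (h : ψ.IsHermitian) : (ptrSnd ψ).IsHermitian := by
  ext r s
  simp only [ptrSnd, Matrix.conjTranspose_apply, Matrix.of_apply, star_sum]
  exact Finset.sum_congr rfl fun a _ => h.apply _ _

theorem sigma_isHermitian {ιA₁ ιA₂ ιR : Type} [Fintype ιA₁] [Fintype ιA₂] [Fintype ιR]
    [DecidableEq ιR]
    {ψ : Matrix ((ιA₁ × ιA₂) × ιR) ((ιA₁ × ιA₂) × ιR) ℂ} (h : ψ.IsHermitian)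
    (U : Matrix (ιA₁ × ιA₂) (ιA₁ × ιA₂) ℂ) : (sigmaA2R ψ U).IsHermitian := by
  ext r s
  simp only [sigma_eq, Matrix.conjTranspose_apply, star_sum]
  exact Finset.sum_congr rfl fun a _ => (rot_isHermitian h U).apply _ _

theorem trace_sq_nonneg {n : Type*} [Fintype n] {M : Matrix n n ℂ} (h : M.IsHermitian) :
    0 ≤ (M * M).trace.re := by
  have := (Matrix.posSemidef_conjTranspose_mul_self M).trace_nonneg
  rw [h.eq] at this
  exact (Complex.le_def.1 this).1

/-- Pointwise bound by the Hilbert-Schmidt norm. -/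
theorem pointwise_bound {ιA₁ ιA₂ ιR : Type} [Fintype ιA₁] [DecidableEq ιA₁] [Fintype ιA₂]
    [DecidableEq ιA₂] [Nonempty ιA₂] [Fintype ιR] [DecidableEq ιR]
    (ψ : Matrix ((ιA₁ × ιA₂) × ιR) ((ιA₁ × ιA₂) × ιR) ℂ) (h : ψ.IsHermitian)
    (U : Matrix (ιA₁ × ιA₂) (ιA₁ × ιA₂) ℂ) (hU : U ∈ Matrix.unitaryGroup (ιA₁ × ιA₂) ℂ) :
    (traceNorm (sigmaA2R ψ U
        - (((Fintype.card ιA₂ : ℂ))⁻¹ • (1 : Matrix ιA₂ ιA₂ ℂ)) ⊗ₖ ptrFst ψ)) ^ 2 ≤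
      (Fintype.card ιA₂ * Fintype.card ιR : ℝ) *
        ((∑ i, ∑ j, ∑ a, ∑ c, quad (rot ψ U) (a, i) (a, j) (c, j) (c, i)).re
          - (Fintype.card ιA₂ : ℝ)⁻¹ * (ptrFst ψ * ptrFst ψ).trace.re) := by
  refine (traceNorm_sq_le _).trans (le_of_eq ?_)
  rw [Fintype.card_prod, Nat.cast_mul]
  congr 1
  have hτ : ((((Fintype.card ιA₂ : ℂ))⁻¹ • (1 : Matrix ιA₂ ιA₂ ℂ)) ⊗ₖ ptrFst ψ).IsHermitian := by
    unfold Matrix.IsHermitian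
    rw [Matrix.conjTranspose_kronecker, (ptrFst_isHermitian h).eq]
    simp
  rw [← trace_sigma_sq, ((sigma_isHermitian h U).sub hτ).eq, sub_mul, mul_sub, mul_sub,
    Matrix.trace_sub, Matrix.trace_sub, Matrix.trace_sub]
  rw [Matrix.trace_mul_comm (_ ⊗ₖ _) (sigmaA2R ψ U), trace_mul_tau, trace_mul_tau, ptrFst_tau,
    ptrFst_sigma, ptrFst_rot _ _ hU]
  have : ((Fintype.card ιA₂ : ℂ))⁻¹ = (((Fintype.card ιA₂ : ℝ)⁻¹ : ℝ) : ℂ) := by simp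
  rw [this]
  simp only [Complex.sub_re, Complex.re_ofReal_mul]
  ring

/-- A function on the unitary group that is measurable and bounded. -/
def BddMeas {n : Type*} [Fintype n] [DecidableEq n] (f : Matrix.unitaryGroup n ℂ → ℂ) : Prop :=
  Measurable f ∧ ∃ C : ℝ, ∀ U, ‖f U‖ ≤ C

theorem BddMeas.entry {n : Type*} [Fintype n] [DecidableEq n] (i j : n) :
    BddMeas (fun U : Matrix.unitaryGroup n ℂ => (U : Matrix n n ℂ) i j) := by
  refine ⟨?_, 1, fun U => entry_norm_bound_of_unitary U.2 i j⟩
  have h : Measurable (fun M : Matrix n n ℂ => M i j) :=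
    (measurable_pi_apply j).comp (measurable_pi_apply (X := fun _ : n => n → ℂ) i)
  exact h.comp measurable_subtype_coe

theorem BddMeas.const {n : Type*} [Fintype n] [DecidableEq n] (c : ℂ) :
    BddMeas (fun _ : Matrix.unitaryGroup n ℂ => c) :=
  ⟨measurable_const, ‖c‖, fun _ => le_rfl⟩

theorem BddMeas.star {n : Type*} [Fintype n] [DecidableEq n]
    {f : Matrix.unitaryGroup n ℂ → ℂ} (hf : BddMeas f) : BddMeas (fun U => Star.star (f U)) := by
  obtain ⟨h1, C, h2⟩ := hf
  refine ⟨continuous_star.measurable.comp h1, C, fun U => ?_⟩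
  rw [norm_star]
  exact h2 U

theorem BddMeas.mul {n : Type*} [Fintype n] [DecidableEq n]
    {f g : Matrix.unitaryGroup n ℂ → ℂ} (hf : BddMeas f) (hg : BddMeas g) :
    BddMeas (fun U => f U * g U) := by
  obtain ⟨h1, C, h2⟩ := hf
  obtain ⟨h3, D, h4⟩ := hg
  refine ⟨h1.mul h3, C * D, fun U => ?_⟩
  rw [norm_mul]
  exact mul_le_mul (h2 U) (h4 U) (norm_nonneg _) ((norm_nonneg _).trans (h2 U))

theorem BddMeas.sum {n ι : Type*} [Fintype n] [DecidableEq n] [Fintype ι]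
    {f : ι → Matrix.unitaryGroup n ℂ → ℂ} (hf : ∀ i, BddMeas (f i)) :
    BddMeas (fun U => ∑ i, f i U) := by
  choose h1 C h2 using hf
  exact ⟨Finset.measurable_sum _ fun i _ => h1 i, ∑ i, C i,
    fun U => (norm_sum_le _ _).trans (Finset.sum_le_sum fun i _ => h2 i U)⟩

theorem BddMeas.integrable {n : Type*} [Fintype n] [DecidableEq n]
    {f : Matrix.unitaryGroup n ℂ → ℂ} (hf : BddMeas f)
    (μ : Measure (Matrix.unitaryGroup n ℂ)) [IsProbabilityMeasure μ] : Integrable f μ := by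
  obtain ⟨h1, C, h2⟩ := hf
  exact Integrable.of_bound h1.aestronglyMeasurable C (Filter.Eventually.of_forall h2)

theorem bddMeas_quad {n β : Type*} [Fintype n] [DecidableEq n] [Fintype β] [DecidableEq β]
    (ψ : Matrix (n × β) (n × β) ℂ) (w x y z : n) :
    BddMeas (fun U : Matrix.unitaryGroup n ℂ => quad (rot ψ (U : Matrix n n ℂ)) w x y z) := by
  have hr : ∀ w r x s, BddMeas (fun U : Matrix.unitaryGroup n ℂ =>
      rot ψ (U : Matrix n n ℂ) (w, r) (x, s)) := by
    intro w r x s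
    simp only [rot_apply]
    exact BddMeas.sum fun w' => BddMeas.sum fun x' =>
      ((BddMeas.entry _ _).mul (BddMeas.entry _ _).star).mul (BddMeas.const _)
  unfold quad
  exact BddMeas.sum fun r => BddMeas.sum fun s => (hr _ _ _ _).mul (hr _ _ _ _)

theorem measurable_left_mul {n : Type*} [Fintype n] [DecidableEq n]
    (V : Matrix.unitaryGroup n ℂ) :
    Measurable (fun U : Matrix.unitaryGroup n ℂ => V * U) := by
  refine Measurable.subtype_mk ?_
  refine measurable_pi_lambda (X := fun _ : n => n → ℂ) _ fun i => measurable_pi_lambda _ fun j => ?_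
  have : BddMeas (fun U : Matrix.unitaryGroup n ℂ =>
      ∑ k, (V : Matrix n n ℂ) i k * (U : Matrix n n ℂ) k j) :=
    BddMeas.sum fun k => (BddMeas.const _).mul (BddMeas.entry _ _)
  exact this.1

theorem tensorInv_moment {n β : Type*} [Fintype n] [DecidableEq n] [Fintype β] [DecidableEq β]
    (ψ : Matrix (n × β) (n × β) ℂ)
    (μ : Measure (Matrix.unitaryGroup n ℂ)) [IsProbabilityMeasure μ]
    (hμ : ∀ V : Matrix.unitaryGroup n ℂ,
      μ.map (fun U : Matrix.unitaryGroup n ℂ => V * U) = μ) :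
    TensorInv (fun w x y z => ∫ U : Matrix.unitaryGroup n ℂ,
      quad (rot ψ (U : Matrix n n ℂ)) w x y z ∂μ) := by
  intro V hV w x y z
  have hi : ∀ w x y z, Integrable (fun U : Matrix.unitaryGroup n ℂ =>
    quad (rot ψ (U : Matrix n n ℂ)) w x y z) μ := fun w x y z => (bddMeas_quad ψ w x y z).integrable μ
  have h1 : ∫ U : Matrix.unitaryGroup n ℂ, quad (rot ψ (U : Matrix n n ℂ)) w x y z ∂μ =
      ∫ U : Matrix.unitaryGroup n ℂ, ∑ w', ∑ x', ∑ y', ∑ z', V w w' * star (V x x') * V y y' *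
        star (V z z') * quad (rot ψ (U : Matrix n n ℂ)) w' x' y' z' ∂μ := by
    conv_lhs => rw [← hμ ⟨V, hV⟩]
    rw [integral_map (measurable_left_mul _).aemeasurable
      (bddMeas_quad ψ w x y z).1.aestronglyMeasurable]
    refine integral_congr_ae (Filter.Eventually.of_forall fun U => ?_)
    show quad (rot ψ (V * (U : Matrix n n ℂ))) w x y z = _
    rw [rot_mul]
    exact quad_rot _ _ _ _ _ _
  show ∫ U : Matrix.unitaryGroup n ℂ, quad (rot ψ (U : Matrix n n ℂ)) w x y z ∂μ = _
  rw [h1]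
  rw [integral_finsetSum _ fun w' _ => integrable_finsetSum _ fun x' _ => integrable_finsetSum _
    fun y' _ => integrable_finsetSum _ fun z' _ => (hi _ _ _ _).const_mul _]
  refine Finset.sum_congr rfl fun w' _ => ?_
  rw [integral_finsetSum _ fun x' _ => integrable_finsetSum _
    fun y' _ => integrable_finsetSum _ fun z' _ => (hi _ _ _ _).const_mul _]
  refine Finset.sum_congr rfl fun x' _ => ?_
  rw [integral_finsetSum _ fun y' _ => integrable_finsetSum _ fun z' _ => (hi _ _ _ _).const_mul _]
  refine Finset.sum_congr rfl fun y' _ => ?_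
  rw [integral_finsetSum _ fun z' _ => (hi _ _ _ _).const_mul _]
  refine Finset.sum_congr rfl fun z' _ => ?_
  rw [integral_const_mul]

theorem arith_bound (a b Y Z R P S : ℝ) (ha : 1 ≤ a) (hb : 1 ≤ b) (hR : 0 ≤ R) (hP : 0 ≤ P)
    (eR : R = (a * b) ^ 2 * Y + (a * b) * Z) (eP : P = (a * b) * Y + (a * b) ^ 2 * Z)
    (eS : S = a ^ 2 * b * Y + a * b ^ 2 * Z) : S - b⁻¹ * R ≤ a⁻¹ * P := by
  have ha0 : 0 < a := by linarith
  have hb0 : 0 < b := by linarith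
  have hd : 1 ≤ a * b := by nlinarith
  have e1 : a⁻¹ * P + b⁻¹ * R - S = b * Y + a * Z := by
    rw [eR, eP, eS]; field_simp; ring
  suffices 0 ≤ b * Y + a * Z by linarith
  rcases hd.eq_or_lt with h1 | h1
  · have ha1 : a = 1 := by nlinarith
    have hb1 : b = 1 := by nlinarith
    subst ha1 hb1
    linarith
  · have e2 : (a * b) * ((a * b) ^ 2 - 1) * (b * Y + a * Z) =
        (b * (a * b) - a) * R + (a * (a * b) - b) * P := by
      rw [eR, eP]; ring
    have h2 : 0 ≤ b * (a * b) - a := by nlinarith [mul_nonneg ha0.le (sub_nonneg.2 hb)]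
    have h3 : 0 ≤ a * (a * b) - b := by nlinarith [mul_nonneg hb0.le (sub_nonneg.2 ha)]
    have h4 : 0 < (a * b) * ((a * b) ^ 2 - 1) := by
      apply mul_pos <;> nlinarith
    by_contra hneg
    have := mul_neg_of_pos_of_neg h4 (not_le.1 hneg)
    have := mul_nonneg h2 hR
    have := mul_nonneg h3 hP
    linarith

/-- **Decoupling with a fixed target state.**  For a density operator `ψ^{AR}` on `A ⊗ R`
with `A = A₁ ⊗ A₂`, the Haar average of `‖σ^{A₂R}(U) − (I^{A₂}/d_{A₂}) ⊗ ψ^R‖₁²` is at most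
`(2 d_A d_R / d_{A₁}²)(Tr[(ψ^{AR})²] + 2 Tr[(ψ^A)²] Tr[(ψ^R)²])`. -/
theorem decoupling_to_product
    {ιA₁ ιA₂ ιR : Type} [Fintype ιA₁] [DecidableEq ιA₁] [Fintype ιA₂] [DecidableEq ιA₂]
    [Fintype ιR] [DecidableEq ιR]
    (ψ : Matrix ((ιA₁ × ιA₂) × ιR) ((ιA₁ × ιA₂) × ιR) ℂ)
    (hψ : ψ.PosSemidef) (hψtr : ψ.trace = 1)
    (μ : Measure (Matrix.unitaryGroup (ιA₁ × ιA₂) ℂ)) [IsProbabilityMeasure μ]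
    (hμ : ∀ V : Matrix.unitaryGroup (ιA₁ × ιA₂) ℂ,
      μ.map (fun U : Matrix.unitaryGroup (ιA₁ × ιA₂) ℂ => V * U) = μ) :
    (∫ U : Matrix.unitaryGroup (ιA₁ × ιA₂) ℂ,
        (traceNorm (sigmaA2R ψ (U : Matrix (ιA₁ × ιA₂) (ιA₁ × ιA₂) ℂ)
            - (((Fintype.card ιA₂ : ℂ))⁻¹ • (1 : Matrix ιA₂ ιA₂ ℂ)) ⊗ₖ ptrFst ψ)) ^ 2 ∂μ)
      ≤ (2 * (Fintype.card ιA₁ * Fintype.card ιA₂ * Fintype.card ιR : ℝ)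
            / (Fintype.card ιA₁ : ℝ) ^ 2)
        * ((ψ * ψ).trace.re
            + 2 * ((ptrSnd ψ * ptrSnd ψ).trace.re) * ((ptrFst ψ * ptrFst ψ).trace.re)) := by
  have hH := hψ.1
  have hne : Nonempty ((ιA₁ × ιA₂) × ιR) := by
    by_contra hcon
    rw [not_nonempty_iff] at hcon
    rw [Matrix.trace_eq_zero_of_isEmpty] at hψtr
    exact zero_ne_one hψtr
  obtain ⟨⟨⟨a₀, b₀⟩, r₀⟩⟩ := hne
  have hA₁ : Nonempty ιA₁ := ⟨a₀⟩
  have hA₂ : Nonempty ιA₂ := ⟨b₀⟩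
  have ha : (1 : ℝ) ≤ Fintype.card ιA₁ := by exact_mod_cast Fintype.card_pos
  have hb : (1 : ℝ) ≤ Fintype.card ιA₂ := by exact_mod_cast Fintype.card_pos
  have hR := trace_sq_nonneg (ptrFst_isHermitian hH)
  have hA := trace_sq_nonneg (ptrSnd_isHermitian hH)
  have hP := trace_sq_nonneg hH
  have hi : ∀ w x y z, Integrable (fun U : Matrix.unitaryGroup (ιA₁ × ιA₂) ℂ =>
    quad (rot ψ (U : Matrix (ιA₁ × ιA₂) (ιA₁ × ιA₂) ℂ)) w x y z) μ :=
    fun w x y z => (bddMeas_quad ψ w x y z).integrable μ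
  obtain ⟨Y, Z, hYZ⟩ := (tensorInv_moment ψ μ hμ).form
  have eR : (ptrFst ψ * ptrFst ψ).trace = ∑ w, ∑ y, ∫ U : Matrix.unitaryGroup (ιA₁ × ιA₂) ℂ,
      quad (rot ψ (U : Matrix (ιA₁ × ιA₂) (ιA₁ × ιA₂) ℂ)) w w y y ∂μ := by
    rw [Finset.sum_congr rfl fun w _ => (integral_finsetSum _ fun y _ => hi w w y y).symm,
      ← integral_finsetSum _ fun w _ => integrable_finsetSum _ fun y _ => hi w w y y]
    simp_rw [quad_R]
    rw [integral_congr_ae (Filter.Eventually.of_forall fun U => by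
      show _ = (ptrFst ψ * ptrFst ψ).trace
      rw [ptrFst_rot _ _ U.2])]
    simp
  have eP : (ψ * ψ).trace = ∑ w, ∑ x, ∫ U : Matrix.unitaryGroup (ιA₁ × ιA₂) ℂ,
      quad (rot ψ (U : Matrix (ιA₁ × ιA₂) (ιA₁ × ιA₂) ℂ)) w x x w ∂μ := by
    rw [Finset.sum_congr rfl fun w _ => (integral_finsetSum _ fun y _ => hi w y y w).symm,
      ← integral_finsetSum _ fun w _ => integrable_finsetSum _ fun y _ => hi w y y w]
    simp_rw [quad_P]
    rw [integral_congr_ae (Filter.Eventually.of_forall fun U => by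
      show _ = (ψ * ψ).trace
      rw [trace_rot_sq _ _ U.2])]
    simp
  have iS : Integrable (fun U : Matrix.unitaryGroup (ιA₁ × ιA₂) ℂ => ∑ i, ∑ j, ∑ a, ∑ c,
      quad (rot ψ (U : Matrix (ιA₁ × ιA₂) (ιA₁ × ιA₂) ℂ)) (a, i) (a, j) (c, j) (c, i)) μ :=
    integrable_finsetSum _ fun i _ => integrable_finsetSum _ fun j _ =>
      integrable_finsetSum _ fun a _ => integrable_finsetSum _ fun c _ => hi _ _ _ _
  have eS : ∫ U : Matrix.unitaryGroup (ιA₁ × ιA₂) ℂ, ∑ i, ∑ j, ∑ a, ∑ c,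
      quad (rot ψ (U : Matrix (ιA₁ × ιA₂) (ιA₁ × ιA₂) ℂ)) (a, i) (a, j) (c, j) (c, i) ∂μ =
      ∑ i, ∑ j, ∑ a, ∑ c, ∫ U : Matrix.unitaryGroup (ιA₁ × ιA₂) ℂ,
      quad (rot ψ (U : Matrix (ιA₁ × ιA₂) (ιA₁ × ιA₂) ℂ)) (a, i) (a, j) (c, j) (c, i) ∂μ := by
    rw [integral_finsetSum _ fun i _ => integrable_finsetSum _ fun j _ =>
      integrable_finsetSum _ fun a _ => integrable_finsetSum _ fun c _ => hi _ _ _ _]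
    refine Finset.sum_congr rfl fun i _ => ?_
    rw [integral_finsetSum _ fun j _ =>
      integrable_finsetSum _ fun a _ => integrable_finsetSum _ fun c _ => hi _ _ _ _]
    refine Finset.sum_congr rfl fun j _ => ?_
    rw [integral_finsetSum _ fun a _ => integrable_finsetSum _ fun c _ => hi _ _ _ _]
    refine Finset.sum_congr rfl fun a _ => ?_
    rw [integral_finsetSum _ fun c _ => hi _ _ _ _]
  set S : ℂ := ∫ U : Matrix.unitaryGroup (ιA₁ × ιA₂) ℂ, ∑ i, ∑ j, ∑ a, ∑ c,
      quad (rot ψ (U : Matrix (ιA₁ × ιA₂) (ιA₁ × ιA₂) ℂ)) (a, i) (a, j) (c, j) (c, i) ∂μ with hS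
  simp only [hYZ] at eR eP eS
  have eR' : (ptrFst ψ * ptrFst ψ).trace =
      ((Fintype.card ιA₁ : ℂ) * Fintype.card ιA₂) ^ 2 * Y
        + ((Fintype.card ιA₁ : ℂ) * Fintype.card ιA₂) * Z := by
    rw [eR]
    simp only [Finset.sum_add_distrib, and_self, if_true, Finset.sum_const, Finset.card_univ,
      Fintype.card_prod, nsmul_eq_mul, Finset.sum_ite_eq, Finset.mem_univ]
    push_cast
    ring
  have eP' : (ψ * ψ).trace =
      ((Fintype.card ιA₁ : ℂ) * Fintype.card ιA₂) * Y
        + ((Fintype.card ιA₁ : ℂ) * Fintype.card ιA₂) ^ 2 * Z := by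
    rw [eP]
    have : ∀ w x : ιA₁ × ιA₂, (w = x ∧ x = w) ↔ w = x := fun w x =>
      ⟨fun h => h.1, fun h => ⟨h, h.symm⟩⟩
    simp only [this, Finset.sum_add_distrib, and_self, if_true, Finset.sum_const, Finset.card_univ,
      Fintype.card_prod, nsmul_eq_mul, Finset.sum_ite_eq, Finset.mem_univ]
    push_cast
    ring
  have eS' : S = (Fintype.card ιA₁ : ℂ) ^ 2 * Fintype.card ιA₂ * Y
        + (Fintype.card ιA₁ : ℂ) * (Fintype.card ιA₂ : ℂ) ^ 2 * Z := by
    rw [eS]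
    have h1 : ∀ (i j : ιA₂) (a c : ιA₁), ((a, i) = (a, j) ∧ (c, j) = (c, i)) ↔ i = j := by
      intro i j a c
      simp only [Prod.mk.injEq, true_and]
      exact ⟨fun h => h.1, fun h => ⟨h, h.symm⟩⟩
    have h2 : ∀ (i j : ιA₂) (a c : ιA₁), ((a, i) = (c, i) ∧ (a, j) = (c, j)) ↔ a = c := by
      intro i j a c
      simp
    simp only [h1, h2, Finset.sum_add_distrib, Finset.sum_const, Finset.card_univ,
      nsmul_eq_mul, Finset.sum_ite_eq, Finset.mem_univ, if_true, mul_ite, mul_zero]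
    ring
  have hre : ∀ (k : ℕ) (c : ℂ), ((k : ℂ) * c).re = (k : ℝ) * c.re := by
    intro k c
    simp
  have key := arith_bound (Fintype.card ιA₁) (Fintype.card ιA₂) Y.re Z.re
    (ptrFst ψ * ptrFst ψ).trace.re (ψ * ψ).trace.re S.re ha hb hR hP
    (by
      have := congrArg Complex.re eR'
      rw [this, Complex.add_re]
      norm_cast
      rw [hre, hre])
    (by
      have := congrArg Complex.re eP'
      rw [this, Complex.add_re]
      norm_cast
      rw [hre, hre])
    (by
      have := congrArg Complex.re eS'
      rw [this, Complex.add_re]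
      norm_cast
      rw [hre, hre])
  have hmono := integral_mono_of_nonneg (μ := μ)
    (Filter.Eventually.of_forall fun U : Matrix.unitaryGroup (ιA₁ × ιA₂) ℂ => sq_nonneg
      (traceNorm (sigmaA2R ψ (U : Matrix (ιA₁ × ιA₂) (ιA₁ × ιA₂) ℂ)
            - (((Fintype.card ιA₂ : ℂ))⁻¹ • (1 : Matrix ιA₂ ιA₂ ℂ)) ⊗ₖ ptrFst ψ)))
    ((iS.re.sub (integrable_const ((Fintype.card ιA₂ : ℝ)⁻¹ *
      (ptrFst ψ * ptrFst ψ).trace.re))).const_mul (Fintype.card ιA₂ * Fintype.card ιR : ℝ))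
    (Filter.Eventually.of_forall fun U => pointwise_bound ψ hH _ U.2)
  refine hmono.trans ?_
  have eI : ∫ U : Matrix.unitaryGroup (ιA₁ × ιA₂) ℂ, (Fintype.card ιA₂ * Fintype.card ιR : ℝ) *
      (RCLike.re (∑ i, ∑ j, ∑ a, ∑ c,
      quad (rot ψ (U : Matrix (ιA₁ × ιA₂) (ιA₁ × ιA₂) ℂ)) (a, i) (a, j) (c, j) (c, i)) -
      ((Fintype.card ιA₂ : ℝ)⁻¹ * (ptrFst ψ * ptrFst ψ).trace.re)) ∂μ =
      (Fintype.card ιA₂ * Fintype.card ιR : ℝ) *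
        (S.re - (Fintype.card ιA₂ : ℝ)⁻¹ * (ptrFst ψ * ptrFst ψ).trace.re) := by
    rw [integral_const_mul, integral_sub iS.re (integrable_const _), integral_re iS]
    simp [hS]
  refine eI.le.trans ?_
  have hnn : (0 : ℝ) ≤ Fintype.card ιA₂ * Fintype.card ιR := by positivity
  refine (mul_le_mul_of_nonneg_left key hnn).trans ?_
  have ha0 : (0 : ℝ) < Fintype.card ιA₁ := by linarith
  have e : (2 * (Fintype.card ιA₁ * Fintype.card ιA₂ * Fintype.card ιR : ℝ)
            / (Fintype.card ιA₁ : ℝ) ^ 2) =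
      2 * ((Fintype.card ιA₂ * Fintype.card ιR) * (Fintype.card ιA₁ : ℝ)⁻¹) := by
    field_simp
  rw [e]
  have hc : (0 : ℝ) ≤ (Fintype.card ιA₂ * Fintype.card ιR) * (Fintype.card ιA₁ : ℝ)⁻¹ := by
    positivity
  have := mul_nonneg hc hP
  have := mul_nonneg hc (mul_nonneg hA hR)
  nlinarith
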